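/- Let n > m ≥ 1, let r = X_a s ∈ uR^X_m be a ranker starting with an X-letter and r' = Y_b s' ∈ uR^Y_m a ranker starting with a Y-letter, with |r| + |r'| ≤ n. Let u, v ∈ A* be such that r and r' are condensed on both u and v. If u ⊳_{m+1,n} v or u ⊲_{m+1,n} v, then ord(r(u), r'(u)) = ord(r(v), r'(v)). -/

import Mathlib

namespace RankerPaper

variable {A : Type*} [DecidableEq A]

/-- Letters of rankers: `X a` ("next `a` to the right") and `Y a` ("next `a` to the left"). -/
inductive RLetter (A : Type*) where
  | X : A → RLetter A
  | Y : A → RLetter A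
  deriving DecidableEq

/-- Least `a`-position of `u` strictly greater than `q` (positions are 1-indexed). -/
def nextOcc (u : List A) (a : A) (q : ℕ) : Option ℕ :=
  ((List.range (u.length + 2)).filter (fun i => decide (q < i ∧ u[i-1]? = some a))).head?

/-- Greatest `a`-position of `u` strictly less than `q` (positions are 1-indexed). -/
def prevOcc (u : List A) (a : A) (q : ℕ) : Option ℕ :=
  ((List.range (u.length + 2)).filter
    (fun i => decide (1 ≤ i ∧ i < q ∧ u[i-1]? = some a))).getLast?

/-- One evaluation step of a ranker letter from position `q`. -/
def stepR (u : List A) : RLetter A → ℕ → Option ℕ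
  | .X a, q => nextOcc u a q
  | .Y a, q => prevOcc u a q

/-- Evaluation of a ranker from position `q`, processing letters left to right. -/
def evalFrom (u : List A) : List (RLetter A) → ℕ → Option ℕ
  | [], q => some q
  | z :: r, q => (stepR u z q).bind (evalFrom u r)

/-- Starting position: `0` for an `X`-letter, `|u|+1` for a `Y`-letter. -/
def startPos (u : List A) : RLetter A → ℕ
  | .X _ => 0
  | .Y _ => u.length + 1

/-- The position `r(u)` defined by the ranker `r` on `u` (`none` if undefined;
empty rankers are considered undefined, rankers being nonempty words). -/
def evalR (u : List A) (r : List (RLetter A)) : Option ℕ :=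
  match r with
  | [] => none
  | z :: t => evalFrom u (z :: t) (startPos u z)

/-- `r` is defined on `u`. -/
def Defined (u : List A) (r : List (RLetter A)) : Prop := (evalR u r).isSome

/-- The position `r(u)` (defaulting to `0` when undefined). -/
def pos (u : List A) (r : List (RLetter A)) : ℕ := (evalR u r).getD 0

/-- Do two ranker letters have the same direction? -/
def sameDir : RLetter A → RLetter A → Bool
  | .X _, .X _ => true
  | .Y _, .Y _ => true
  | _, _ => false

/-- Number of (alternating) blocks of a ranker. -/
def numBlocks : List (RLetter A) → ℕ
  | [] => 0
  | [_] => 1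
  | z :: w :: t => (if sameDir z w then 0 else 1) + numBlocks (w :: t)

def startsX (r : List (RLetter A)) : Prop := ∃ a t, r = RLetter.X a :: t
def startsY (r : List (RLetter A)) : Prop := ∃ a t, r = RLetter.Y a :: t
def endsX (r : List (RLetter A)) : Prop := ∃ a, r.getLast? = some (RLetter.X a)
def endsY (r : List (RLetter A)) : Prop := ∃ a, r.getLast? = some (RLetter.Y a)

/-- `R^X_{m,n}`: rankers with exactly `m` blocks, depth `n`, starting with an `X`-block. -/
def RX (m n : ℕ) (r : List (RLetter A)) : Prop :=
  numBlocks r = m ∧ r.length = n ∧ startsX r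

/-- `R^Y_{m,n}`: rankers with exactly `m` blocks, depth `n`, starting with a `Y`-block. -/
def RY (m n : ℕ) (r : List (RLetter A)) : Prop :=
  numBlocks r = m ∧ r.length = n ∧ startsY r

/-- `uR^X_{m,n}`. -/
def uRX (m n : ℕ) (r : List (RLetter A)) : Prop :=
  (∃ m' n', m' ≤ m ∧ n' ≤ n ∧ RX m' n' r) ∨ (∃ m' n', m' < m ∧ n' < n ∧ RY m' n' r)

/-- `uR^Y_{m,n}`. -/
def uRY (m n : ℕ) (r : List (RLetter A)) : Prop :=
  (∃ m' n', m' ≤ m ∧ n' ≤ n ∧ RY m' n' r) ∨ (∃ m' n', m' < m ∧ n' < n ∧ RX m' n' r)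

/-- `uR_{m,n} = uR^X_{m,n} ∪ uR^Y_{m,n}`. -/
def uR (m n : ℕ) (r : List (RLetter A)) : Prop := uRX m n r ∨ uRY m n r

/-- `uR^X_m = ∪_{n ≥ m} uR^X_{m,n}`. -/
def uRXm (m : ℕ) (r : List (RLetter A)) : Prop := ∃ n, m ≤ n ∧ uRX m n r

/-- `uR^Y_m = ∪_{n ≥ m} uR^Y_{m,n}`. -/
def uRYm (m : ℕ) (r : List (RLetter A)) : Prop := ∃ n, m ≤ n ∧ uRY m n r

/-- `r = Z₁ ⋯ Z_n` is condensed on `u`: it is defined on `u` and there is a chain of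
open intervals `(0;|u|+1) = (i₀;j₀) ⊃ (i₁;j₁) ⊃ ⋯ ⊃ (i_{n-1};j_{n-1}) ∋ r(u)`
updated according to the pairs `Z_ℓ Z_{ℓ+1}`. -/
def Condensed (u : List A) (r : List (RLetter A)) : Prop :=
  ∃ (p : ℕ) (i j : ℕ → ℕ),
    evalR u r = some p ∧
    i 0 = 0 ∧ j 0 = u.length + 1 ∧
    (∀ ℓ a b, 1 ≤ ℓ → r[ℓ-1]? = some (RLetter.X a) → r[ℓ]? = some (RLetter.X b) →
        nextOcc u a (i (ℓ-1)) = some (i ℓ) ∧ j ℓ = j (ℓ-1)) ∧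
    (∀ ℓ a b, 1 ≤ ℓ → r[ℓ-1]? = some (RLetter.Y a) → r[ℓ]? = some (RLetter.Y b) →
        i ℓ = i (ℓ-1) ∧ prevOcc u a (j (ℓ-1)) = some (j ℓ)) ∧
    (∀ ℓ a b, 1 ≤ ℓ → r[ℓ-1]? = some (RLetter.X a) → r[ℓ]? = some (RLetter.Y b) →
        i ℓ = i (ℓ-1) ∧ nextOcc u a (i (ℓ-1)) = some (j ℓ)) ∧
    (∀ ℓ a b, 1 ≤ ℓ → r[ℓ-1]? = some (RLetter.Y a) → r[ℓ]? = some (RLetter.X b) →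
        prevOcc u a (j (ℓ-1)) = some (i ℓ) ∧ j ℓ = j (ℓ-1)) ∧
    (∀ ℓ, 1 ≤ ℓ → ℓ < r.length →
        i (ℓ-1) ≤ i ℓ ∧ j ℓ ≤ j (ℓ-1) ∧ (i (ℓ-1) < i ℓ ∨ j ℓ < j (ℓ-1))) ∧
    i (r.length - 1) < p ∧ p < j (r.length - 1)

/-- `u` and `v` agree on rankers from the set `R`. -/
def AgreeDef (R : List (RLetter A) → Prop) (u v : List A) : Prop :=
  ∀ r, R r → (Defined u r ↔ Defined v r)

/-- `u` and `v` agree on condensed rankers from the set `R`. -/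
def AgreeCond (R : List (RLetter A) → Prop) (u v : List A) : Prop :=
  ∀ r, R r → (Condensed u r ↔ Condensed v r)

/-- `u ⊳_{m,n} v`. -/
def trir (m n : ℕ) (u v : List A) : Prop := AgreeCond (uRX m n) u v

/-- `u ⊲_{m,n} v`. -/
def tril (m n : ℕ) (u v : List A) : Prop := AgreeCond (uRY m n) u v

/-- The alphabet (set of letters) of a word. -/
def alph (u : List A) : Finset A := u.toFinset

/-- Condition (WI 1). -/
def WI1 (m n : ℕ) (u v : List A) : Prop := AgreeDef (uR m n) u v

/-- Condition (WI 2). -/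
def WI2 (m n : ℕ) (u v : List A) : Prop :=
  ∀ r r', uR m n r → uR (m-1) (n-1) r' →
    Defined u r → Defined v r → Defined u r' → Defined v r' →
    compare (pos u r) (pos u r') = compare (pos v r) (pos v r')

/-- Condition (WI 3). -/
def WI3 (m n : ℕ) (u v : List A) : Prop :=
  ∀ r r', uR m n r → uR m (n-1) r' →
    ((endsX r ∧ endsY r') ∨ (endsY r ∧ endsX r')) →
    Defined u r → Defined v r → Defined u r' → Defined v r' →
    compare (pos u r) (pos u r') = compare (pos v r) (pos v r')

/-- Condition (WI 1c). -/
def WI1c (m n : ℕ) (u v : List A) : Prop := AgreeCond (uR m n) u v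

/-- Condition (WI 2c). -/
def WI2c (m n : ℕ) (u v : List A) : Prop :=
  ∀ r r', uR m n r → uR (m-1) (n-1) r' →
    Condensed u r → Condensed v r → Condensed u r' → Condensed v r' →
    compare (pos u r) (pos u r') = compare (pos v r) (pos v r')

/-- Condition (WI 3c). -/
def WI3c (m n : ℕ) (u v : List A) : Prop :=
  ∀ r r', uR m n r → uR m (n-1) r' →
    ((endsX r ∧ endsY r') ∨ (endsY r ∧ endsX r')) →
    Condensed u r → Condensed v r → Condensed u r' → Condensed v r' →
    compare (pos u r) (pos u r') = compare (pos v r) (pos v r')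


set_option linter.unusedSectionVars false

/-! abstract part -/

def isX : RLetter A → Bool
  | .X _ => true
  | .Y _ => false

def let' : RLetter A → A
  | .X a => a
  | .Y a => a

def fl : RLetter A → RLetter A
  | .X a => .Y a
  | .Y a => .X a

def sd : List (RLetter A) → Bool
  | [] => true
  | [z] => isX z
  | _ :: w :: t => sd (w :: t)

def Fst (w : ℤ → A → Prop) (c : A) (i j p : ℤ) : Prop :=
  w p c ∧ i < p ∧ p < j ∧ ∀ x, i < x → x < p → ¬ w x c

def Lst (w : ℤ → A → Prop) (c : A) (i j p : ℤ) : Prop :=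
  w p c ∧ i < p ∧ p < j ∧ ∀ x, p < x → x < j → ¬ w x c

inductive K (w : ℤ → A → Prop) (L H : ℤ) : List (RLetter A) → ℤ → ℤ → ℤ → Prop
  | nilL : K w L H [] L H L
  | nilH : K w L H [] L H H
  | consX {t : List (RLetter A)} {i j q p : ℤ} {c : A} :
      K w L H t i j q → Fst w c q j p → K w L H (.X c :: t) q j p
  | consY {t : List (RLetter A)} {i j q p : ℤ} {c : A} :
      K w L H t i j q → Lst w c i q p → K w L H (.Y c :: t) i q p

theorem K.bounds {w : ℤ → A → Prop} {L H : ℤ} (hLH : L ≤ H) {t i j p} (h : K w L H t i j p) :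
    L ≤ i ∧ j ≤ H ∧ i ≤ p ∧ p ≤ j ∧ (t ≠ [] → i < p ∧ p < j) := by
  induction h with
  | nilL => simp [hLH]
  | nilH => simp [hLH]
  | consX h hf ih => obtain ⟨_, _, _, _⟩ := hf; grind
  | consY h hf ih => obtain ⟨_, _, _, _⟩ := hf; grind

theorem K.det {w : ℤ → A → Prop} {L H : ℤ} {t i j p i' j' p'} (h : K w L H t i j p)
    (h' : K w L H t i' j' p') (ht : t ≠ []) : i = i' ∧ j = j' ∧ p = p' := by
  induction h generalizing i' j' p' with
  | nilL => simp at ht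
  | nilH => simp at ht
  | @consX t i j q p c h hf ih =>
    cases h' with
    | @consX _ i2 j2 q2 _ _ h2 hf2 =>
      have key : q = i' ∧ j = j' := by
        by_cases h0 : t = []
        · subst h0
          obtain ⟨_, _, _, _⟩ := hf
          obtain ⟨_, _, _, _⟩ := hf2
          cases h <;> cases h2 <;> constructor <;> first | rfl | omega
        · have := ih h2 h0
          exact ⟨this.2.2, this.2.1⟩
      obtain ⟨rfl, rfl⟩ := key
      refine ⟨rfl, rfl, ?_⟩
      obtain ⟨a1, a2, a3, a4⟩ := hf
      obtain ⟨b1, b2, b3, b4⟩ := hf2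
      by_contra hne
      rcases lt_or_gt_of_ne hne with h | h
      · exact b4 _ a2 h a1
      · exact a4 _ b2 h b1
  | @consY t i j q p c h hf ih =>
    cases h' with
    | @consY _ i2 j2 q2 _ _ h2 hf2 =>
      have key : q = j' ∧ i = i' := by
        by_cases h0 : t = []
        · subst h0
          obtain ⟨_, _, _, _⟩ := hf
          obtain ⟨_, _, _, _⟩ := hf2
          cases h <;> cases h2 <;> constructor <;> first | rfl | omega
        · have := ih h2 h0
          exact ⟨this.2.2, this.1⟩
      obtain ⟨rfl, rfl⟩ := key
      refine ⟨rfl, rfl, ?_⟩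
      obtain ⟨a1, a2, a3, a4⟩ := hf
      obtain ⟨b1, b2, b3, b4⟩ := hf2
      by_contra hne
      rcases lt_or_gt_of_ne hne with h | h
      · exact a4 _ h b3 b1
      · exact b4 _ h a3 a1

theorem K.letter {w : ℤ → A → Prop} {L H : ℤ} {z t i j p} (h : K w L H (z :: t) i j p) :
    w p (let' z) := by
  cases h with
  | consX h hf => exact hf.1
  | consY h hf => exact hf.1

def fw (w : ℤ → A → Prop) : ℤ → A → Prop := fun x a => w (-x) a

theorem fw_fw (w : ℤ → A → Prop) : fw (fw w) = w := by
  funext x a; simp [fw]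

theorem fl_fl (r : List (RLetter A)) : (r.map fl).map fl = r := by
  induction r with
  | nil => rfl
  | cons z t ih => cases z <;> simp_all [fl]

theorem K.flip {w : ℤ → A → Prop} {L H : ℤ} {t i j p} (h : K w L H t i j p) :
    K (fw w) (-H) (-L) (t.map fl) (-j) (-i) (-p) := by
  induction h with
  | nilL => exact K.nilH
  | nilH => exact K.nilL
  | consX h hf ih =>
    refine K.consY ih ?_
    obtain ⟨a1, a2, a3, a4⟩ := hf
    exact ⟨by simpa [fw] using a1, by omega, by omega, fun x h1 h2 => a4 _ (by omega) (by omega)⟩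
  | consY h hf ih =>
    refine K.consX ih ?_
    obtain ⟨a1, a2, a3, a4⟩ := hf
    exact ⟨by simpa [fw] using a1, by omega, by omega, fun x h1 h2 => a4 _ (by omega) (by omega)⟩

theorem K.flip' {w : ℤ → A → Prop} {L H : ℤ} {t i j p} (h : K (fw w) (-H) (-L) (t.map fl) i j p) :
    K w L H t (-j) (-i) (-p) := by
  have := h.flip
  rwa [fw_fw, fl_fl, neg_neg, neg_neg] at this

theorem nb_fl (r : List (RLetter A)) : numBlocks (r.map fl) = numBlocks r := by
  induction r with
  | nil => rfl
  | cons z t ih =>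
    cases t with
    | nil => rfl
    | cons z2 t => cases z <;> cases z2 <;> simp_all [fl, numBlocks, sameDir]

theorem sd_fl (r : List (RLetter A)) (h : r ≠ []) : sd (r.map fl) = !(sd r) := by
  induction r with
  | nil => simp at h
  | cons z t ih =>
    cases t with
    | nil => cases z <;> rfl
    | cons z2 t => simpa [sd] using ih (by simp)

theorem nb_le (z : RLetter A) (t) : numBlocks (z :: t) ≤ numBlocks t + 1 := by
  cases t with
  | nil => simp [numBlocks]
  | cons z2 t => simp only [numBlocks]; split_ifs <;> omega

theorem nb_ge (z : RLetter A) (t) : numBlocks t ≤ numBlocks (z :: t) := by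
  cases t with
  | nil => simp [numBlocks]
  | cons z2 t => simp only [numBlocks]; omega

theorem nb_pos (r : List (RLetter A)) (h : r ≠ []) : 1 ≤ numBlocks r := by
  induction r with
  | nil => simp at h
  | cons z t ih =>
    cases t with
    | nil => simp [numBlocks]
    | cons z2 t => have := ih (by simp); simp only [numBlocks]; omega

theorem nb_par (z : RLetter A) (t) :
    numBlocks (z :: t) % 2 = if isX z = sd (z :: t) then 1 else 0 := by
  induction t generalizing z with
  | nil => simp [numBlocks, sd]
  | cons z2 t ih =>
    have := ih z2
    simp only [numBlocks, sd]
    have key : ∀ (b : Bool) (N : ℕ), (N % 2 = if isX z2 = b then 1 else 0) →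
        ((if sameDir z z2 = true then 0 else 1) + N) % 2 = if isX z = b then 1 else 0 := by
      intro b N h
      cases z <;> cases z2 <;> cases b <;> simp [isX, sameDir] at * <;> omega
    exact key _ _ this

/-- proper nonempty suffix, with bookkeeping -/
def Pr (t r : List (RLetter A)) : Prop :=
  t ≠ [] ∧ t.length < r.length ∧ sd t = sd r ∧ numBlocks t ≤ numBlocks r

theorem Pr.self (z : RLetter A) {t} (h : t ≠ []) : Pr t (z :: t) := by
  refine ⟨h, by simp, ?_, nb_ge _ _⟩
  cases t with
  | nil => simp at h
  | cons => rfl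

theorem Pr.trans {t r s : List (RLetter A)} (h : Pr t r) (h' : Pr r s) : Pr t s :=
  ⟨h.1, h.2.1.trans h'.2.1, h.2.2.1.trans h'.2.2.1, h.2.2.2.trans h'.2.2.2⟩

theorem K.ep {w w2 : ℤ → A → Prop} {L H L2 H2 : ℤ} {r i j p k l q}
    (h : K w L H r i j p) (h2 : K w2 L2 H2 r k l q) :
    ((i = L ∧ k = L2) ∨ ∃ t i1 j1 k1 l1, Pr t r ∧ K w L H t i1 j1 i ∧ K w2 L2 H2 t k1 l1 k) ∧
    ((j = H ∧ l = H2) ∨ ∃ t i1 j1 k1 l1, Pr t r ∧ K w L H t i1 j1 j ∧ K w2 L2 H2 t k1 l1 l) := by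
  induction h generalizing k l q with
  | nilL => cases h2 <;> simp
  | nilH => cases h2 <;> simp
  | @consX t i j q p c h hf ih =>
    cases h2 with
    | @consX _ i2 j2 q2 _ _ h2 hf2 =>
      by_cases h0 : t = []
      · subst h0
        obtain ⟨_, _, _, _⟩ := hf
        obtain ⟨_, _, _, _⟩ := hf2
        cases h <;> cases h2 <;> first | omega | simp
      · refine ⟨Or.inr ⟨t, _, _, _, _, Pr.self _ h0, h, h2⟩, ?_⟩
        rcases (ih h2).2 with e | ⟨t', _, _, _, _, a, b, c⟩
        · exact Or.inl e
        · exact Or.inr ⟨t', _, _, _, _, a.trans (Pr.self _ h0), b, c⟩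
  | @consY t i j q p c h hf ih =>
    cases h2 with
    | @consY _ i2 j2 q2 _ _ h2 hf2 =>
      by_cases h0 : t = []
      · subst h0
        obtain ⟨_, _, _, _⟩ := hf
        obtain ⟨_, _, _, _⟩ := hf2
        cases h <;> cases h2 <;> first | omega | simp
      · refine ⟨?_, Or.inr ⟨t, _, _, _, _, Pr.self _ h0, h, h2⟩⟩
        rcases (ih h2).1 with e | ⟨t', _, _, _, _, a, b, c⟩
        · exact Or.inl e
        · exact Or.inr ⟨t', _, _, _, _, a.trans (Pr.self _ h0), b, c⟩

theorem K.extY {w : ℤ → A → Prop} {L H : ℤ} {r i j p i' j' y d} (h : K w L H r i j p)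
    (hr : r ≠ []) (h' : K w L H (.Y d :: r) i' j' y) : Lst w d i p y := by
  cases h' with
  | consY h2 hf =>
    obtain ⟨rfl, rfl, rfl⟩ := h.det h2 hr
    exact hf

theorem K.extY' {w : ℤ → A → Prop} {L H : ℤ} {r i j p x d} (h : K w L H r i j p)
    (hx : w x d) (h1 : i < x) (h2 : x < p) : ∃ y, x ≤ y ∧ K w L H (.Y d :: r) i p y := by
  obtain ⟨y, ⟨hy1, hy2, hy3⟩, hy⟩ := Int.exists_greatest_of_bdd (P := fun y => w y d ∧ i < y ∧ y < p)
    ⟨p, fun z hz => by omega⟩ ⟨x, hx, h1, h2⟩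
  refine ⟨y, hy x ⟨hx, h1, h2⟩, K.consY h ⟨hy1, hy2, hy3, ?_⟩⟩
  intro z hz hz' hw
  have := hy z ⟨hw, by omega, hz'⟩
  omega

def C (w : ℤ → A → Prop) (L H : ℤ) (r : List (RLetter A)) : Prop := ∃ i j p, K w L H r i j p

def Ag (δ : Bool) (m n : ℕ) (w w2 : ℤ → A → Prop) (L H L2 H2 : ℤ) : Prop :=
  ∀ t, t ≠ [] → ((sd t = δ ∧ numBlocks t ≤ m + 1 ∧ t.length ≤ n) ∨
    (sd t = !δ ∧ numBlocks t ≤ m ∧ t.length + 1 ≤ n)) → (C w L H t ↔ C w2 L2 H2 t)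

def Cmp (w w2 : ℤ → A → Prop) (L H L2 H2 : ℤ) (r r' : List (RLetter A)) : Prop :=
  ∀ i j p i' j' p' k l q k' l' q', K w L H r i j p → K w L H r' i' j' p' →
    K w2 L2 H2 r k l q → K w2 L2 H2 r' k' l' q' → (p < p' ↔ q < q') ∧ (p' < p ↔ q' < q)

def Ok (δ : Bool) (m n : ℕ) (t t' : List (RLetter A)) : Prop :=
  t ≠ [] ∧ t' ≠ [] ∧ sd t = δ ∧ sd t' = (!δ) ∧ numBlocks t ≤ m ∧ numBlocks t' ≤ m ∧
    t.length + t'.length ≤ n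

def IH (δ : Bool) (m n : ℕ) (w w2 : ℤ → A → Prop) (L H L2 H2 : ℤ) (r r' : List (RLetter A)) :
    Prop :=
  ∀ t t', Ok δ m n t t' →
    (t'.length < r'.length ∨ (t'.length = r'.length ∧ t.length < r.length)) →
    Cmp w w2 L H L2 H2 t t'

theorem sd_cons (z : RLetter A) {t} (h : t ≠ []) : sd (z :: t) = sd t := by
  cases t with
  | nil => simp at h
  | cons => rfl

theorem half {δ : Bool} {m n : ℕ} {w w2 : ℤ → A → Prop} {L H L2 H2 : ℤ}
    (hLH : L ≤ H) (hLH2 : L2 ≤ H2)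
    (fun1 : ∀ x a b, w x a → w x b → a = b) (fun2 : ∀ x a b, w2 x a → w2 x b → a = b)
    (hA : Ag δ m n w w2 L H L2 H2) {r t' : List (RLetter A)} {d : A}
    (ok : Ok δ m n r (.X d :: t')) (ih : IH δ m n w w2 L H L2 H2 r (.X d :: t'))
    {i j p i' j' p' k l q k' l' q' : ℤ} (K1 : K w L H r i j p) (K1' : K w L H (.X d :: t') i' j' p')
    (K2 : K w2 L2 H2 r k l q) (K2' : K w2 L2 H2 (.X d :: t') k' l' q') :
    (p' < p → q' < q) ∧ (p = p' → q' ≤ q) := by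
  obtain ⟨hr0, hr0', hs, hs', hb, hb', hlen⟩ := ok
  have bp := K1.bounds hLH
  have bp' := K1'.bounds hLH
  have bq := K2.bounds hLH2
  have bq' := K2'.bounds hLH2
  replace bp := And.intro bp.1 (And.intro bp.2.1 (bp.2.2.2.2 hr0))
  replace bp' := And.intro bp'.1 (And.intro bp'.2.1 (bp'.2.2.2.2 hr0'))
  replace bq := And.intro bq.1 (And.intro bq.2.1 (bq.2.2.2.2 hr0))
  replace bq' := And.intro bq'.1 (And.intro bq'.2.1 (bq'.2.2.2.2 hr0'))
  -- comparisons by induction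
  have cmpL : ∀ t, Pr t r → Cmp w w2 L H L2 H2 t (.X d :: t') := fun t ht =>
    ih _ _ ⟨ht.1, hr0', ht.2.2.1.trans hs, hs', ht.2.2.2.trans hb, hb', by have := ht.2.1; omega⟩
      (Or.inr ⟨rfl, ht.2.1⟩)
  have cmpR : ∀ t, Pr t (.X d :: t') → Cmp w w2 L H L2 H2 r t := fun t ht =>
    ih _ _ ⟨hr0, ht.1, hs, ht.2.2.1.trans hs', hb, ht.2.2.2.trans hb', by have := ht.2.1; omega⟩
      (Or.inl ht.2.1)
  have cmpLR : ∀ t s, Pr t r → Pr s (.X d :: t') → Cmp w w2 L H L2 H2 t s := fun t s ht hs1 =>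
    ih _ _ ⟨ht.1, hs1.1, ht.2.2.1.trans hs, hs1.2.2.1.trans hs', ht.2.2.2.trans hb,
      hs1.2.2.2.trans hb', by have := ht.2.1; have := hs1.2.1; omega⟩
      (Or.inl hs1.2.1)
  obtain ⟨eL, eR⟩ := K1.ep K2
  obtain ⟨eL', eR'⟩ := K1'.ep K2'
  have A1 : (i < p' ↔ k < q') := by
    rcases eL with ⟨rfl, rfl⟩ | ⟨t, _, _, _, _, ht, h1, h2⟩
    · constructor <;> intro <;> omega
    · exact (cmpL t ht _ _ _ _ _ _ _ _ _ _ _ _ h1 K1' h2 K2').1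
  have A2 : (p' < j ↔ q' < l) := by
    rcases eR with ⟨rfl, rfl⟩ | ⟨t, _, _, _, _, ht, h1, h2⟩
    · constructor <;> intro <;> omega
    · exact (cmpL t ht _ _ _ _ _ _ _ _ _ _ _ _ h1 K1' h2 K2').2
  have B1 : (i' < p ↔ k' < q) := by
    rcases eL' with ⟨rfl, rfl⟩ | ⟨t, _, _, _, _, ht, h1, h2⟩
    · constructor <;> intro <;> omega
    · exact (cmpR t ht _ _ _ _ _ _ _ _ _ _ _ _ K1 h1 K2 h2).2
  have B2 : (p < j' ↔ q < l') := by
    rcases eR' with ⟨rfl, rfl⟩ | ⟨t, _, _, _, _, ht, h1, h2⟩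
    · constructor <;> intro <;> omega
    · exact (cmpR t ht _ _ _ _ _ _ _ _ _ _ _ _ K1 h1 K2 h2).1
  have C1 : (i < i' ↔ k < k') := by
    rcases eL with ⟨rfl, rfl⟩ | ⟨t, _, _, _, _, ht, h1, h2⟩
    · rcases eL' with ⟨rfl, rfl⟩ | ⟨t', _, _, _, _, ht', h1', h2'⟩
      · simp
      · have b1 := h1'.bounds hLH
        have b2 := h2'.bounds hLH2
        have b1' := b1.2.2.2.2 ht'.1
        have b2' := b2.2.2.2.2 ht'.1
        constructor <;> intro <;> omega
    · rcases eL' with ⟨rfl, rfl⟩ | ⟨t', _, _, _, _, ht', h1', h2'⟩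
      · constructor <;> intro <;> omega
      · exact (cmpLR t t' ht ht' _ _ _ _ _ _ _ _ _ _ _ _ h1 h1' h2 h2').1
  by_cases c1 : i < p'
  swap
  · omega
  by_cases c2 : p' < j
  swap
  · omega
  by_cases c3 : i' < p
  swap
  · omega
  by_cases c4 : p < j'
  swap
  · omega
  have F1 : Fst w d i' j' p' := by cases K1' with | consX _ h => exact h
  have F2 : Fst w2 d k' l' q' := by cases K2' with | consX _ h => exact h
  obtain ⟨f1, f2, f3, f4⟩ := F1
  obtain ⟨g1, g2, g3, g4⟩ := F2
  obtain ⟨z, t, rfl⟩ := List.exists_cons_of_ne_nil hr0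
  have lz1 := K1.letter
  have lz2 := K2.letter
  refine ⟨?_, ?_⟩
  swap
  · rintro rfl
    have := fun1 _ _ _ lz1 f1
    rw [this] at lz2
    by_contra hlt
    exact g4 q (by omega) (by omega) lz2
  intro hlt
  have hl1 : 1 ≤ (RLetter.X d :: t').length := by simp
  obtain ⟨y, hy1, hy2⟩ := K1.extY' f1 c1 hlt
  have hAr := hA (.Y d :: z :: t) (by simp) (Or.inl ⟨by rw [sd_cons _ hr0, hs],
    (nb_le _ _).trans (by omega), by simp only [List.length_cons] at *; omega⟩)
  obtain ⟨_, _, y2, hy2'⟩ := hAr.1 ⟨_, _, _, hy2⟩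
  obtain ⟨m1, m2, m3, m4⟩ := K2.extY hr0 hy2'
  by_cases hi : i < i'
  swap
  · by_contra hge
    exact g4 y2 (by omega) (by omega) m1
  by_cases hnb : numBlocks (.Y d :: z :: t) ≤ m
  · rcases eL' with ⟨e, _⟩ | ⟨s, _, _, _, _, ht', h1', h2'⟩
    · omega
    · have := ih (.Y d :: z :: t) s ⟨by simp, ht'.1, by rw [sd_cons _ hr0, hs],
        ht'.2.2.1.trans hs', hnb, ht'.2.2.2.trans hb', by
          have := ht'.2.1; simp only [List.length_cons] at *; omega⟩ (Or.inl ht'.2.1)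
        _ _ _ _ _ _ _ _ _ _ _ _ hy2 h1' hy2' h2'
      by_contra hge
      exact g4 y2 (by omega) (by omega) m1
  · cases z with
    | Y c => simp [numBlocks, sameDir] at hnb; omega
    | X c =>
      have F1 : Fst w c i j p := by cases K1 with | consX _ h => exact h
      obtain ⟨u1, u2, u3, u4⟩ := F1
      have hm : numBlocks (.X c :: t) = m := by
        simp [numBlocks, sameDir] at hnb; omega
      have p1 := nb_par (.X c) t
      have p2 := nb_par (.X d) t'
      have hlt' : numBlocks (.X d :: t') < m := by
        rw [hs] at p1; rw [hs'] at p2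
        cases δ <;> simp [isX] at p1 p2 <;> omega
      have hpos := nb_pos _ hr0'
      have hl2 : 2 ≤ (RLetter.X c :: t).length := by
        cases t with
        | nil => simp [numBlocks] at hm; omega
        | cons => simp
      by_contra hge
      have hne : q ≠ q' := by
        rintro rfl
        have := fun2 _ _ _ lz2 g1
        simp only [let'] at this
        subst this
        exact u4 _ c1 hlt f1
      obtain ⟨y3, hy3, hk3⟩ := K2'.extY' (x := q) lz2 (by omega) (by omega)
      have hAr' := hA (.Y c :: .X d :: t') (by simp) (Or.inr ⟨by rw [sd_cons _ hr0', hs'],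
        (nb_le _ _).trans (by omega), by simp only [List.length_cons] at *; omega⟩)
      obtain ⟨_, _, y4, hy4⟩ := hAr'.2 ⟨_, _, _, hk3⟩
      obtain ⟨v1, v2, v3, v4⟩ := K1'.extY hr0' hy4
      exact u4 y4 (by omega) (by omega) v1

theorem Ag.symm {δ : Bool} {m n : ℕ} {w w2 : ℤ → A → Prop} {L H L2 H2 : ℤ}
    (h : Ag δ m n w w2 L H L2 H2) : Ag δ m n w2 w L2 H2 L H :=
  fun t ht h' => (h t ht h').symm

theorem Cmp.symm {w w2 : ℤ → A → Prop} {L H L2 H2 : ℤ} {r r'}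
    (h : Cmp w w2 L H L2 H2 r r') : Cmp w2 w L2 H2 L H r r' := by
  intro _ _ _ _ _ _ _ _ _ _ _ _ h1 h2 h3 h4
  have := h _ _ _ _ _ _ _ _ _ _ _ _ h3 h4 h1 h2
  exact ⟨this.1.symm, this.2.symm⟩

theorem stepX {δ : Bool} {m n : ℕ} {w w2 : ℤ → A → Prop} {L H L2 H2 : ℤ}
    (hLH : L ≤ H) (hLH2 : L2 ≤ H2)
    (fun1 : ∀ x a b, w x a → w x b → a = b) (fun2 : ∀ x a b, w2 x a → w2 x b → a = b)
    (hA : Ag δ m n w w2 L H L2 H2) {r t' : List (RLetter A)} {d : A}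
    (ok : Ok δ m n r (.X d :: t')) (ih : IH δ m n w w2 L H L2 H2 r (.X d :: t')) :
    Cmp w w2 L H L2 H2 r (.X d :: t') := by
  intro _ _ _ _ _ _ _ _ _ _ _ _ h1 h2 h3 h4
  have e1 := half hLH hLH2 fun1 fun2 hA ok ih h1 h2 h3 h4
  have e2 := half hLH2 hLH fun2 fun1 hA.symm ok (fun t t' h h' => (ih t t' h h').symm) h3 h4 h1 h2
  omega

theorem Cmp.flip {w w2 : ℤ → A → Prop} {L H L2 H2 : ℤ} {r r'}
    (h : Cmp w w2 L H L2 H2 r r') :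
    Cmp (fw w) (fw w2) (-H) (-L) (-H2) (-L2) (r.map fl) (r'.map fl) := by
  intro _ _ _ _ _ _ _ _ _ _ _ _ h1 h2 h3 h4
  have := h _ _ _ _ _ _ _ _ _ _ _ _ h1.flip' h2.flip' h3.flip' h4.flip'
  omega

theorem C.flip_iff {w : ℤ → A → Prop} {L H : ℤ} {t} :
    C (fw w) (-H) (-L) (t.map fl) ↔ C w L H t :=
  ⟨fun ⟨_, _, _, h⟩ => ⟨_, _, _, h.flip'⟩, fun ⟨_, _, _, h⟩ => ⟨_, _, _, h.flip⟩⟩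

theorem Ok.flip {δ : Bool} {m n : ℕ} {r r' : List (RLetter A)} (h : Ok δ m n r r') :
    Ok (!δ) m n (r.map fl) (r'.map fl) := by
  obtain ⟨h1, h2, h3, h4, h5, h6, h7⟩ := h
  exact ⟨by simpa, by simpa, by rw [sd_fl _ h1, h3], by rw [sd_fl _ h2, h4], by rwa [nb_fl],
    by rwa [nb_fl], by simpa using h7⟩

theorem Ag.flip {δ : Bool} {m n : ℕ} {w w2 : ℤ → A → Prop} {L H L2 H2 : ℤ}
    (h : Ag δ m n w w2 L H L2 H2) : Ag (!δ) m n (fw w) (fw w2) (-H) (-L) (-H2) (-L2) := by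
  intro t ht h'
  rw [← fl_fl t, C.flip_iff, C.flip_iff]
  refine h _ (by simpa) ?_
  rw [sd_fl _ ht, nb_fl, List.length_map]
  rcases h' with h' | h'
  · left; rw [h'.1]; simpa using h'.2
  · right; rw [h'.1]; simpa using h'.2

theorem stepY {δ : Bool} {m n : ℕ} {w w2 : ℤ → A → Prop} {L H L2 H2 : ℤ}
    (hLH : L ≤ H) (hLH2 : L2 ≤ H2)
    (fun1 : ∀ x a b, w x a → w x b → a = b) (fun2 : ∀ x a b, w2 x a → w2 x b → a = b)
    (hA : Ag δ m n w w2 L H L2 H2) {r t' : List (RLetter A)} {d : A}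
    (ok : Ok δ m n r (.Y d :: t')) (ih : IH δ m n w w2 L H L2 H2 r (.Y d :: t')) :
    Cmp w w2 L H L2 H2 r (.Y d :: t') := by
  have := stepX (w := fw w) (w2 := fw w2) (neg_le_neg hLH) (neg_le_neg hLH2) (fun x a b => fun1 (-x) a b)
    (fun x a b => fun2 (-x) a b) hA.flip (r := r.map fl) (t' := t'.map fl) (d := d) ok.flip
    (by
      intro s s' hok hl
      have h2 := hok.flip
      rw [Bool.not_not] at h2
      have := (ih _ _ h2 (by simpa using hl)).flip
      rwa [fl_fl, fl_fl] at this)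
  have h3 := this.flip
  rw [fw_fw, fw_fw, fl_fl, neg_neg, neg_neg, neg_neg, neg_neg] at h3
  have e : List.map fl (RLetter.X d :: List.map fl t') = RLetter.Y d :: t' := by
    rw [List.map_cons, fl_fl]; rfl
  rwa [e] at h3

theorem mainAbs {δ : Bool} {m n : ℕ} {w w2 : ℤ → A → Prop} {L H L2 H2 : ℤ}
    (hLH : L ≤ H) (hLH2 : L2 ≤ H2)
    (fun1 : ∀ x a b, w x a → w x b → a = b) (fun2 : ∀ x a b, w2 x a → w2 x b → a = b)
    (hA : Ag δ m n w w2 L H L2 H2) (N' N : ℕ) : ∀ (r r' : List (RLetter A)),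
    r'.length = N' → r.length = N → Ok δ m n r r' → Cmp w w2 L H L2 H2 r r' := by
  induction N' using Nat.strong_induction_on generalizing N with
  | _ N' ih1 =>
  induction N using Nat.strong_induction_on with
  | _ N ih2 =>
  intro r r' h1 h2 ok
  have ih : IH δ m n w w2 L H L2 H2 r r' := by
    intro t t' hok hl
    rcases hl with hl | ⟨hl, hl'⟩
    · exact ih1 _ (h1 ▸ hl) _ _ _ rfl rfl hok
    · exact ih2 _ (h2 ▸ hl') _ _ (hl.trans h1) rfl hok
  obtain ⟨z, t, rfl⟩ := List.exists_cons_of_ne_nil ok.2.1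
  cases z with
  | X d => exact stepX hLH hLH2 fun1 fun2 hA ok ih
  | Y d => exact stepY hLH hLH2 fun1 fun2 hA ok ih

/-! bridge -/

theorem nextOcc_iff (u : List A) (a : A) (q p : ℕ) : nextOcc u a q = some p ↔
    q < p ∧ u[p-1]? = some a ∧ ∀ k, q < k → k < p → u[k-1]? ≠ some a := by
  unfold nextOcc
  rw [List.head?_filter, List.find?_range_eq_some]
  simp only [decide_eq_true_eq, List.mem_range, Bool.not_eq_true', decide_eq_false_iff_not, not_and]
  constructor
  · rintro ⟨⟨h1, h2⟩, _, h3⟩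
    exact ⟨h1, h2, fun k hk hk' => h3 k hk' hk⟩
  · rintro ⟨h1, h2, h3⟩
    have := (List.getElem?_eq_some_iff.1 h2).1
    exact ⟨⟨h1, h2⟩, by omega, fun k hk hk' => h3 k hk' hk⟩

theorem getLast?_pw (l : List ℕ) (h : l.Pairwise (· < ·)) (p : ℕ) :
    l.getLast? = some p ↔ p ∈ l ∧ ∀ x ∈ l, x ≤ p := by
  induction l using List.reverseRecOn with
  | nil => simp
  | append_singleton l z ih =>
    rw [List.pairwise_append] at h
    have h3 : ∀ x ∈ l, x < z := fun x hx => h.2.2 x hx z (by simp)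
    simp only [List.getLast?_append, List.getLast?_singleton, Option.some_or, Option.some.injEq,
      List.mem_append, List.mem_singleton]
    constructor
    · rintro rfl
      exact ⟨Or.inr rfl, fun x hx => hx.elim (fun h => (h3 x h).le) (fun h => h.le)⟩
    · rintro ⟨h1 | h1, h2⟩
      · have := h3 p h1
        have := h2 z (Or.inr rfl)
        omega
      · exact h1.symm

theorem prevOcc_iff (u : List A) (a : A) (q p : ℕ) : prevOcc u a q = some p ↔
    1 ≤ p ∧ p < q ∧ u[p-1]? = some a ∧ ∀ k, p < k → k < q → u[k-1]? ≠ some a := by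
  unfold prevOcc
  rw [getLast?_pw _ (List.pairwise_lt_range.filter _)]
  simp only [List.mem_filter, List.mem_range, decide_eq_true_eq]
  constructor
  · rintro ⟨⟨h0, h1, h2, h3⟩, h4⟩
    refine ⟨h1, h2, h3, fun k hk hk' hu => ?_⟩
    have := (List.getElem?_eq_some_iff.1 hu).1
    have := h4 k ⟨by omega, by omega, hk', hu⟩
    omega
  · rintro ⟨h1, h2, h3, h4⟩
    have := (List.getElem?_eq_some_iff.1 h3).1
    refine ⟨⟨by omega, h1, h2, h3⟩, ?_⟩
    rintro x ⟨_, x1, x2, x3⟩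
    by_contra hx
    exact h4 x (by omega) x2 x3

def wd (u : List A) : ℤ → A → Prop := fun x a => ∃ k : ℕ, x = k ∧ 1 ≤ k ∧ u[k-1]? = some a

theorem wd_fun (u : List A) : ∀ x a b, wd u x a → wd u x b → a = b := by
  rintro x a b ⟨k, rfl, _, h⟩ ⟨k', e, _, h'⟩
  have : k = k' := by omega
  subst this
  rw [h] at h'
  exact Option.some.inj h'

theorem Fst_iff (u : List A) (a : A) (i j p : ℕ) :
    Fst (wd u) a i j p ↔ nextOcc u a i = some p ∧ p < j := by
  rw [nextOcc_iff]
  constructor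
  · rintro ⟨⟨k, hk, h1, h2⟩, h3, h4, h5⟩
    have : p = k := by omega
    subst this
    refine ⟨⟨by omega, h2, fun k hk hk' hu => ?_⟩, by omega⟩
    exact h5 k (by omega) (by omega) ⟨k, rfl, by omega, hu⟩
  · rintro ⟨⟨h1, h2, h3⟩, h4⟩
    refine ⟨⟨p, rfl, by omega, h2⟩, by omega, by omega, ?_⟩
    rintro x hx hx' ⟨k, rfl, hk, hu⟩
    exact h3 k (by omega) (by omega) hu

theorem Lst_iff (u : List A) (a : A) (i j p : ℕ) :
    Lst (wd u) a i j p ↔ prevOcc u a j = some p ∧ i < p := by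
  rw [prevOcc_iff]
  constructor
  · rintro ⟨⟨k, hk, h1, h2⟩, h3, h4, h5⟩
    have : p = k := by omega
    subst this
    refine ⟨⟨by omega, by omega, h2, fun k hk hk' hu => ?_⟩, by omega⟩
    exact h5 k (by omega) (by omega) ⟨k, rfl, by omega, hu⟩
  · rintro ⟨⟨h0, h1, h2, h3⟩, h4⟩
    refine ⟨⟨p, rfl, by omega, h2⟩, by omega, by omega, ?_⟩
    rintro x hx hx' ⟨k, rfl, hk, hu⟩
    exact h3 k (by omega) (by omega) hu

abbrev KU (u : List A) (t : List (RLetter A)) (i j p : ℤ) : Prop :=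
  K (wd u) 0 ((u.length + 1 : ℕ) : ℤ) t i j p

def src : RLetter A → ℕ → ℕ → ℕ
  | .X _, i, _ => i
  | .Y _, _, j => j

def nxt : RLetter A → ℕ → ℕ → ℕ → ℕ → ℕ → Prop
  | .X _, _, j, q, i', j' => i' = q ∧ j' = j
  | .Y _, i, _, q, i', j' => i' = i ∧ j' = q

def Ch (u : List A) (r : List (RLetter A)) (i j : ℕ → ℕ) : Prop :=
  ∀ ℓ z z', r[ℓ]? = some z → r[ℓ+1]? = some z' →
    ∃ q, stepR u z (src z (i ℓ) (j ℓ)) = some q ∧ nxt z' (i ℓ) (j ℓ) q (i (ℓ+1)) (j (ℓ+1))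

theorem Ch_iff (u : List A) (r : List (RLetter A)) (i j : ℕ → ℕ) : Ch u r i j ↔
    (∀ ℓ a b, 1 ≤ ℓ → r[ℓ-1]? = some (RLetter.X a) → r[ℓ]? = some (RLetter.X b) →
        nextOcc u a (i (ℓ-1)) = some (i ℓ) ∧ j ℓ = j (ℓ-1)) ∧
    (∀ ℓ a b, 1 ≤ ℓ → r[ℓ-1]? = some (RLetter.Y a) → r[ℓ]? = some (RLetter.Y b) →
        i ℓ = i (ℓ-1) ∧ prevOcc u a (j (ℓ-1)) = some (j ℓ)) ∧
    (∀ ℓ a b, 1 ≤ ℓ → r[ℓ-1]? = some (RLetter.X a) → r[ℓ]? = some (RLetter.Y b) →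
        i ℓ = i (ℓ-1) ∧ nextOcc u a (i (ℓ-1)) = some (j ℓ)) ∧
    (∀ ℓ a b, 1 ≤ ℓ → r[ℓ-1]? = some (RLetter.Y a) → r[ℓ]? = some (RLetter.X b) →
        prevOcc u a (j (ℓ-1)) = some (i ℓ) ∧ j ℓ = j (ℓ-1)) := by
  constructor
  · intro h
    refine ⟨?_, ?_, ?_, ?_⟩ <;>
    · intro ℓ a b h1 h2 h3
      obtain ⟨k, rfl⟩ : ∃ k, ℓ = k + 1 := ⟨ℓ - 1, by omega⟩
      obtain ⟨q, hq, hn⟩ := h k _ _ h2 h3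
      obtain ⟨e1, e2⟩ := hn
      simp only [stepR, src] at hq
      simp [hq, e1, e2]
  · rintro ⟨h1, h2, h3, h4⟩ ℓ z z' hz hz'
    cases z <;> cases z'
    · obtain ⟨a, b⟩ := h1 (ℓ+1) _ _ (by omega) hz hz'
      exact ⟨_, a, rfl, b⟩
    · obtain ⟨a, b⟩ := h3 (ℓ+1) _ _ (by omega) hz hz'
      exact ⟨_, b, a, rfl⟩
    · obtain ⟨a, b⟩ := h4 (ℓ+1) _ _ (by omega) hz hz'
      exact ⟨_, a, rfl, b⟩
    · obtain ⟨a, b⟩ := h2 (ℓ+1) _ _ (by omega) hz hz'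
      exact ⟨_, b, a, rfl⟩

theorem evalFrom_append (u : List A) (r : List (RLetter A)) (z : RLetter A) (q : ℕ) :
    evalFrom u (r ++ [z]) q = (evalFrom u r q).bind (stepR u z) := by
  induction r generalizing q with
  | nil => simp [evalFrom]
  | cons y r ih =>
    simp only [List.cons_append, evalFrom]
    cases stepR u y q with
    | none => rfl
    | some x => simpa using ih x

theorem evalR_append (u : List A) (r : List (RLetter A)) (z : RLetter A) (hr : r ≠ []) :
    evalR u (r ++ [z]) = (evalR u r).bind (stepR u z) := by
  obtain ⟨y, t, rfl⟩ := List.exists_cons_of_ne_nil hr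
  exact evalFrom_append u (y :: t) z _

theorem evalR_rev (u : List A) (z z2 : RLetter A) (t : List (RLetter A)) :
    evalR u (z :: z2 :: t).reverse = (evalR u (z2 :: t).reverse).bind (stepR u z) := by
  rw [List.reverse_cons, evalR_append _ _ _ (by simp)]

theorem evalR_single (u : List A) (z : RLetter A) :
    evalR u [z] = stepR u z (startPos u z) := by
  simp only [evalR, evalFrom]
  cases stepR u z (startPos u z) <;> rfl

theorem Ch_restrict {u : List A} {z : RLetter A} {t : List (RLetter A)} {i j : ℕ → ℕ}
    (h : Ch u (z :: t).reverse i j) : Ch u t.reverse i j := by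
  intro ℓ y y' hy hy'
  have l1 := (List.getElem?_eq_some_iff.1 hy).1
  have l2 := (List.getElem?_eq_some_iff.1 hy').1
  refine h ℓ y y' ?_ ?_
  · rw [List.reverse_cons, List.getElem?_append_left l1, hy]
  · rw [List.reverse_cons, List.getElem?_append_left l2, hy']

theorem get_last (z : RLetter A) (t : List (RLetter A)) :
    (z :: t).reverse[t.length]? = some z := by
  rw [List.reverse_cons, List.getElem?_append_right (by simp)]; simp

theorem get_last2 (z z2 : RLetter A) (t : List (RLetter A)) :
    (z :: z2 :: t).reverse[t.length]? = some z2 := by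
  rw [List.reverse_cons, List.getElem?_append_left (by simp)]; exact get_last z2 t

theorem evalCh {u : List A} {i j : ℕ → ℕ} (h0 : i 0 = 0) (h0' : j 0 = u.length + 1)
    (t : List (RLetter A)) : ∀ z, Ch u (z :: t).reverse i j →
    evalR u (z :: t).reverse = stepR u z (src z (i t.length) (j t.length)) := by
  induction t with
  | nil =>
    intro z _
    rw [List.reverse_singleton, evalR_single]
    cases z <;> simp [startPos, src, h0, h0']
  | cons z2 t ih =>
    intro z h
    rw [evalR_rev, ih z2 (Ch_restrict h)]
    obtain ⟨q, hq, hn⟩ := h t.length z2 z (get_last2 _ _ _) (get_last z (z2 :: t))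
    rw [hq]
    cases z <;> obtain ⟨e1, e2⟩ := hn <;> simp [src, e1, e2]

theorem step_bd {u : List A} {z : RLetter A} {i j q : ℕ} (h : stepR u z (src z i j) = some q) :
    (isX z = true ∧ i < q) ∨ (isX z = false ∧ q < j) := by
  cases z
  · exact Or.inl ⟨rfl, ((nextOcc_iff _ _ _ _).1 h).1⟩
  · exact Or.inr ⟨rfl, ((prevOcc_iff _ _ _ _).1 h).2.1⟩

theorem Ch_to_K {u : List A} {i j : ℕ → ℕ} (h0 : i 0 = 0) (h0' : j 0 = u.length + 1)
    (t : List (RLetter A)) : ∀ z p, Ch u (z :: t).reverse i j →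
    (∀ ℓ, 1 ≤ ℓ → ℓ < t.length + 1 →
        i (ℓ-1) ≤ i ℓ ∧ j ℓ ≤ j (ℓ-1) ∧ (i (ℓ-1) < i ℓ ∨ j ℓ < j (ℓ-1))) →
    i t.length < p → p < j t.length →
    stepR u z (src z (i t.length) (j t.length)) = some p →
    KU u (z :: t) (i t.length) (j t.length) p := by
  induction t with
  | nil =>
    intro z p _ _ h1 h2 h3
    simp only [List.length_nil, h0, h0'] at *
    cases z with
    | X c => exact K.consX K.nilL ((Fst_iff u c 0 _ p).2 ⟨h3, h2⟩)
    | Y c => exact K.consY K.nilH ((Lst_iff u c 0 _ p).2 ⟨h3, h1⟩)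
  | cons z2 t ih =>
    intro z p h hmono h1 h2 h3
    obtain ⟨q, hq, hn⟩ := h t.length z2 z (get_last2 _ _ _) (get_last z (z2 :: t))
    have hm := hmono (t.length + 1) (by omega) (by simp)
    have hbd := step_bd hq
    simp only [List.length_cons, Nat.add_sub_cancel] at *
    have hK : ∀ (_ : i t.length < q) (_ : q < j t.length), KU u (z2 :: t) (i t.length) (j t.length) q :=
      fun ha hb => ih z2 q (Ch_restrict h) (fun ℓ a b => hmono ℓ a (by omega)) ha hb hq
    cases z with
    | X c =>
      obtain ⟨e1, e2⟩ := hn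
      change nextOcc u c (i (t.length + 1)) = some p at h3
      rw [e1] at hm h1 h3 ⊢
      rw [e2] at hm h2 ⊢
      exact K.consX (hK (by omega) (by omega)) ((Fst_iff u c _ _ p).2 ⟨h3, h2⟩)
    | Y c =>
      obtain ⟨e1, e2⟩ := hn
      change prevOcc u c (j (t.length + 1)) = some p at h3
      rw [e1] at hm h1 ⊢
      rw [e2] at hm h2 h3 ⊢
      exact K.consY (hK (by omega) (by omega)) ((Lst_iff u c _ _ p).2 ⟨h3, h1⟩)

theorem K_nat {u : List A} {t : List (RLetter A)} {i j p : ℤ} (h : KU u t i j p) :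
    ∃ i0 j0 p0 : ℕ, i = i0 ∧ j = j0 ∧ p = p0 := by
  have := h.bounds (by omega)
  exact ⟨i.toNat, j.toNat, p.toNat, by omega, by omega, by omega⟩

theorem K_step {u : List A} {z : RLetter A} {t : List (RLetter A)} {i j p : ℕ}
    (h : KU u (z :: t) i j p) : stepR u z (src z i j) = some p := by
  cases h with
  | consX _ hf => exact ((Fst_iff _ _ _ _ _).1 hf).1
  | consY _ hf => exact ((Lst_iff _ _ _ _ _).1 hf).1

theorem K_inv {u : List A} {z z2 : RLetter A} {t : List (RLetter A)} {i j p : ℕ}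
    (h : KU u (z :: z2 :: t) i j p) : ∃ i1 j1 q : ℕ, KU u (z2 :: t) i1 j1 q ∧
      nxt z i1 j1 q i j ∧ i1 < q ∧ q < j1 := by
  cases h with
  | consX h hf =>
    obtain ⟨i1, j1, q, rfl, e, e'⟩ := K_nat h
    have hb := (h.bounds (by omega)).2.2.2.2 (by simp)
    have e2 : j = j1 := by omega
    have e3 : i = q := by omega
    subst e2 e3
    exact ⟨_, _, _, h, ⟨rfl, rfl⟩, by omega, by omega⟩
  | consY h hf =>
    obtain ⟨i1, j1, q, e, rfl, e'⟩ := K_nat h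
    have hb := (h.bounds (by omega)).2.2.2.2 (by simp)
    have e2 : i = i1 := by omega
    have e3 : j = q := by omega
    subst e2 e3
    exact ⟨_, _, _, h, ⟨rfl, rfl⟩, by omega, by omega⟩

theorem K_to_Ch {u : List A} (t : List (RLetter A)) : ∀ z (i0 j0 p : ℕ), KU u (z :: t) i0 j0 p →
    ∃ i j : ℕ → ℕ, i 0 = 0 ∧ j 0 = u.length + 1 ∧ Ch u (z :: t).reverse i j ∧
    (∀ ℓ, 1 ≤ ℓ → ℓ < t.length + 1 →
        i (ℓ-1) ≤ i ℓ ∧ j ℓ ≤ j (ℓ-1) ∧ (i (ℓ-1) < i ℓ ∨ j ℓ < j (ℓ-1))) ∧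
    i t.length = i0 ∧ j t.length = j0 := by
  induction t with
  | nil =>
    intro z i0 j0 p h
    have hij : i0 = 0 ∧ j0 = u.length + 1 := by
      generalize hi : (i0 : ℤ) = I at h
      generalize hj : (j0 : ℤ) = J at h
      have hb := (h.bounds (by omega)).2.2.2.2 (by simp)
      cases h with
      | consX h hf => cases h <;> omega
      | consY h hf => cases h <;> omega
    refine ⟨fun _ => 0, fun _ => u.length + 1, rfl, rfl, ?_, ?_, hij.1.symm, hij.2.symm⟩
    · intro ℓ y y' hy hy'
      simp at hy'
    · intro ℓ h1 h2
      simp at h2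
      omega
  | cons z2 t ih =>
    intro z i0 j0 p h
    obtain ⟨i1, j1, q, hK, hn, hb1, hb2⟩ := K_inv h
    obtain ⟨i, j, a1, a2, a3, a4, a5, a6⟩ := ih z2 i1 j1 q hK
    have hst := K_step hK
    refine ⟨fun ℓ => if ℓ ≤ t.length then i ℓ else i0, fun ℓ => if ℓ ≤ t.length then j ℓ else j0,
      by simpa, by simpa, ?_, ?_, by simp, by simp⟩
    · intro ℓ y y' hy hy'
      have l2 := (List.getElem?_eq_some_iff.1 hy').1
      simp only [List.length_reverse, List.length_cons] at l2
      by_cases hl : ℓ + 1 ≤ t.length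
      · rw [List.reverse_cons, List.getElem?_append_left (by simp; omega)] at hy hy'
        have := a3 ℓ y y' hy hy'
        simpa [hl, show ℓ ≤ t.length by omega] using this
      · have : ℓ = t.length := by omega
        subst this
        rw [get_last2] at hy
        rw [show t.length + 1 = (z2 :: t).length by simp, get_last] at hy'
        obtain rfl := Option.some.inj hy
        obtain rfl := Option.some.inj hy'
        refine ⟨q, ?_, ?_⟩
        · simpa [a5, a6] using hst
        · simpa [a5, a6] using hn
    · intro ℓ h1 h2
      simp only [List.length_cons] at h2
      by_cases hl : ℓ ≤ t.length
      · simpa [hl, show ℓ ≤ t.length + 1 by omega] using a4 ℓ h1 (by omega)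
      · have : ℓ = t.length + 1 := by omega
        subst this
        simp only [Nat.add_sub_cancel, le_refl, if_true, a5, a6, hl, if_false]
        cases z <;> obtain ⟨e1, e2⟩ := hn <;> omega

theorem Cond_to_K {u : List A} {t : List (RLetter A)} (ht : t ≠ []) (h : Condensed u t.reverse) :
    ∃ i j : ℕ, KU u t i j (pos u t.reverse) := by
  obtain ⟨p, i, j, h1, h2, h3, c1, c2, c3, c4, h4, h5, h6⟩ := h
  have hCh := (Ch_iff u t.reverse i j).2 ⟨c1, c2, c3, c4⟩
  obtain ⟨z, t, rfl⟩ := List.exists_cons_of_ne_nil ht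
  have hp : pos u (z :: t).reverse = p := by rw [pos, h1]; rfl
  simp only [List.length_reverse, List.length_cons, Nat.add_sub_cancel] at h4 h5 h6
  rw [hp]
  refine ⟨_, _, Ch_to_K h2 h3 t z p hCh h4 h5 h6 ?_⟩
  rw [← evalCh h2 h3 t z hCh, h1]

theorem C_to_Cond {u : List A} {t : List (RLetter A)} (ht : t ≠ [])
    (h : C (wd u) 0 ((u.length + 1 : ℕ) : ℤ) t) : Condensed u t.reverse := by
  obtain ⟨i0, j0, p, h⟩ := h
  obtain ⟨i0, j0, p, rfl, rfl, rfl⟩ := K_nat h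
  obtain ⟨z, t, rfl⟩ := List.exists_cons_of_ne_nil ht
  obtain ⟨i, j, a1, a2, a3, a4, a5, a6⟩ := K_to_Ch t z i0 j0 p h
  have hb := (h.bounds (by omega)).2.2.2.2 (by simp)
  have hst := K_step h
  obtain ⟨c1, c2, c3, c4⟩ := (Ch_iff u _ i j).1 a3
  refine ⟨p, i, j, ?_, a1, a2, c1, c2, c3, c4, ?_, ?_, ?_⟩
  · rw [evalCh a1 a2 t z a3, a5, a6, hst]
  · simpa using a4
  · simp [a5]; omega
  · simp [a6]; omega

theorem Cond_iff {u : List A} {t : List (RLetter A)} (ht : t ≠ []) :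
    C (wd u) 0 ((u.length + 1 : ℕ) : ℤ) t ↔ Condensed u t.reverse :=
  ⟨C_to_Cond ht, fun h => by obtain ⟨i, j, h⟩ := Cond_to_K ht h; exact ⟨_, _, _, h⟩⟩

theorem nb_snoc (r : List (RLetter A)) (z2 z : RLetter A) :
    numBlocks (r ++ [z2, z]) = numBlocks (r ++ [z2]) + (if sameDir z z2 then 0 else 1) := by
  induction r with
  | nil => cases z <;> cases z2 <;> simp [numBlocks, sameDir]
  | cons y r ih =>
    cases r with
    | nil => cases z <;> cases z2 <;> cases y <;> simp [numBlocks, sameDir]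
    | cons y2 r =>
      simp only [List.cons_append, numBlocks] at *
      rw [ih]; omega

theorem nb_rev (t : List (RLetter A)) : numBlocks t.reverse = numBlocks t := by
  induction t with
  | nil => rfl
  | cons z t ih =>
    cases t with
    | nil => rfl
    | cons z2 t =>
      have e : (z :: z2 :: t).reverse = t.reverse ++ [z2, z] := by simp
      have e2 : (z2 :: t).reverse = t.reverse ++ [z2] := by simp
      rw [e, nb_snoc, ← e2, ih, numBlocks]; omega

theorem sd_snoc (r : List (RLetter A)) (z : RLetter A) : sd (r ++ [z]) = isX z := by
  induction r with
  | nil => rfl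
  | cons y r ih => rw [List.cons_append, sd_cons _ (by simp), ih]

theorem sd_rev (z : RLetter A) (t : List (RLetter A)) : sd (z :: t).reverse = isX z := by
  rw [List.reverse_cons, sd_snoc]

theorem uRX_of {m n : ℕ} {t : List (RLetter A)} (ht : t ≠ [])
    (h : (sd t = true ∧ numBlocks t ≤ m + 1 ∧ t.length ≤ n) ∨
      (sd t = (!true) ∧ numBlocks t ≤ m ∧ t.length + 1 ≤ n)) : uRX (m+1) n t.reverse := by
  obtain ⟨r, rfl⟩ : ∃ r : List (RLetter A), t = r.reverse := ⟨t.reverse, by simp⟩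
  rw [nb_rev] at h
  rw [List.reverse_reverse]
  cases r with
  | nil => simp at ht
  | cons z r =>
    rw [sd_rev, List.length_reverse] at h
    cases z with
    | X a =>
      rcases h with h | h
      · exact Or.inl ⟨_, _, h.2.1, h.2.2, rfl, rfl, a, r, rfl⟩
      · simp [isX] at h
    | Y a =>
      rcases h with h | h
      · simp [isX] at h
      · exact Or.inr ⟨_, _, by omega, by omega, rfl, rfl, a, r, rfl⟩

theorem uRY_of {m n : ℕ} {t : List (RLetter A)} (ht : t ≠ [])
    (h : (sd t = false ∧ numBlocks t ≤ m + 1 ∧ t.length ≤ n) ∨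
      (sd t = (!false) ∧ numBlocks t ≤ m ∧ t.length + 1 ≤ n)) : uRY (m+1) n t.reverse := by
  obtain ⟨r, rfl⟩ : ∃ r : List (RLetter A), t = r.reverse := ⟨t.reverse, by simp⟩
  rw [nb_rev] at h
  rw [List.reverse_reverse]
  cases r with
  | nil => simp at ht
  | cons z r =>
    rw [sd_rev, List.length_reverse] at h
    cases z with
    | Y a =>
      rcases h with h | h
      · exact Or.inl ⟨_, _, h.2.1, h.2.2, rfl, rfl, a, r, rfl⟩
      · simp [isX] at h
    | X a =>
      rcases h with h | h
      · simp [isX] at h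
      · exact Or.inr ⟨_, _, by omega, by omega, rfl, rfl, a, r, rfl⟩

theorem Cond_to_K' {u : List A} {r : List (RLetter A)} (hr : r ≠ []) (h : Condensed u r) :
    ∃ i j : ℕ, KU u r.reverse i j (pos u r) := by
  have := Cond_to_K (u := u) (t := r.reverse) (by simpa) (by simpa using h)
  simpa using this

theorem cmp_eq {p p' q q' : ℕ} (h : ((p : ℤ) < p' ↔ (q : ℤ) < q') ∧ ((p' : ℤ) < p ↔ (q' : ℤ) < q)) :
    compare p p' = compare q q' := by
  norm_cast at h
  rcases lt_trichotomy p p' with h1 | h1 | h1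
  · rw [compare_lt_iff_lt.2 h1, compare_lt_iff_lt.2 (h.1.1 h1)]
  · have : q = q' := by omega
    rw [h1, this]; simp
  · rw [compare_gt_iff_gt.2 h1, compare_gt_iff_gt.2 (h.2.1 h1)]

/-- Order comparison of condensed rankers starting with opposite
directions. -/
theorem statement12 (m n : ℕ) (hm : 1 ≤ m) (hmn : m < n)
    (a b : A) (s s' : List (RLetter A)) (u v : List A)
    (hr : uRXm m (RLetter.X a :: s)) (hr' : uRYm m (RLetter.Y b :: s'))
    (hlen : (RLetter.X a :: s).length + (RLetter.Y b :: s').length ≤ n)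
    (hcu : Condensed u (RLetter.X a :: s)) (hcv : Condensed v (RLetter.X a :: s))
    (hcu' : Condensed u (RLetter.Y b :: s')) (hcv' : Condensed v (RLetter.Y b :: s'))
    (hrel : trir (m+1) n u v ∨ tril (m+1) n u v) :
    compare (pos u (RLetter.X a :: s)) (pos u (RLetter.Y b :: s')) =
      compare (pos v (RLetter.X a :: s)) (pos v (RLetter.Y b :: s')) := by
  have hb : numBlocks (RLetter.X a :: s) ≤ m := by
    obtain ⟨_, _, h | h⟩ := hr
    · obtain ⟨m', n', h1, h2, h3, _⟩ := h
      omega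
    · obtain ⟨m', n', h1, h2, h3, _, c, t, h4⟩ := h
      simp at h4
  have hb' : numBlocks (RLetter.Y b :: s') ≤ m := by
    obtain ⟨_, _, h | h⟩ := hr'
    · obtain ⟨m', n', h1, h2, h3, _⟩ := h
      omega
    · obtain ⟨m', n', h1, h2, h3, _, c, t, h4⟩ := h
      simp at h4
  obtain ⟨i1, j1, K1⟩ := Cond_to_K' (by simp) hcu
  obtain ⟨i2, j2, K2⟩ := Cond_to_K' (by simp) hcv
  obtain ⟨i3, j3, K3⟩ := Cond_to_K' (by simp) hcu'
  obtain ⟨i4, j4, K4⟩ := Cond_to_K' (by simp) hcv'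
  have hL : ∀ w : List A, (0 : ℤ) ≤ ((w.length + 1 : ℕ) : ℤ) := fun w => by omega
  apply cmp_eq
  rcases hrel with hrel | hrel
  · refine mainAbs (δ := true) (m := m) (n := n) (hL u) (hL v) (wd_fun u) (wd_fun v) ?_ _ _ _ _
      rfl rfl ?_ _ _ _ _ _ _ _ _ _ _ _ _ K1 K3 K2 K4
    · intro t ht h
      rw [Cond_iff ht, Cond_iff ht]
      exact hrel _ (uRX_of ht h)
    · refine ⟨by simp, by simp, sd_rev _ _, sd_rev _ _, by rwa [nb_rev], by rwa [nb_rev], ?_⟩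
      rwa [List.length_reverse, List.length_reverse]
  · refine And.symm (mainAbs (δ := false) (m := m) (n := n) (hL u) (hL v) (wd_fun u) (wd_fun v)
      ?_ _ _ _ _ rfl rfl ?_ _ _ _ _ _ _ _ _ _ _ _ _ K3 K1 K4 K2)
    · intro t ht h
      rw [Cond_iff ht, Cond_iff ht]
      exact hrel _ (uRY_of ht h)
    · refine ⟨by simp, by simp, sd_rev _ _, sd_rev _ _, by rwa [nb_rev], by rwa [nb_rev], ?_⟩
      rw [List.length_reverse, List.length_reverse]
      omega

end RankerPaper
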